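/- Let λ > 0 and let U: (−π,π) → ℝ be the even C² solution of U'' + (cot ρ)·U' + λ·U = 0 (away from ρ = 0) with U(0) = 1, and let R_λ ∈ (0,π) be the smallest positive zero of U. Then there exists ε > 0 with R_λ + ε < π such that U''(ρ)·U(ρ) − U'(ρ)² does not vanish for any ρ ∈ (0, R_λ + ε); in fact U''(ρ)·U(ρ) − U'(ρ)² < 0 on this interval. -/

import Mathlib

open Real Set

/-- `U` is an even `C²` solution of `U'' + (cot ρ)·U' + f(U) = 0` on `(-π, π)`. -/
def IsEvenSol (f U : ℝ → ℝ) : Prop :=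
  (∀ ρ ∈ Set.Ioo (-Real.pi) Real.pi, U (-ρ) = U ρ) ∧
  ContDiffOn ℝ 2 U (Set.Ioo (-Real.pi) Real.pi) ∧
  ∀ ρ ∈ Set.Ioo (-Real.pi) Real.pi, ρ ≠ 0 →
    deriv (deriv U) ρ + (Real.cos ρ / Real.sin ρ) * deriv U ρ + f (U ρ) = 0

/-!
For a radial equation `U'' + (w'/w) U' + f(U) = 0`, the numerator `U'' U - U'²` of `(log U)''`,
multiplied by the weight `w`, has derivative
`U U' (w'² - w w'') / w + w U' (f(U) - U f'(U))`.
While `U > 0`, the flux `w U'` decreases from `0`, so `U' < 0`; strict log-concavity of `w` and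
sublinearity of `f` then make the weighted numerator decrease strictly from `0`. It is still
negative at the end of the interval of positivity, hence slightly beyond it by continuity.
On the sphere `w = sin`, whose log-concavity is `sin² + cos² = 1`.
-/

theorem neg_of_deriv_neg {g : ℝ → ℝ} {a b : ℝ} (hg : ContinuousOn g (Icc a b)) (hga : g a ≤ 0)
    (hg' : ∀ x ∈ Ioo a b, deriv g x < 0) : ∀ x ∈ Ioc a b, g x < 0 := by
  intro x hx
  have hanti : StrictAntiOn g (Icc a b) :=
    strictAntiOn_of_deriv_neg (convex_Icc a b) hg (by rwa [interior_Icc])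
  have hab : a ≤ b := hx.1.le.trans hx.2
  exact (hanti (left_mem_Icc.2 hab) (Ioc_subset_Icc_self hx) hx.1).trans_le hga

theorem pos_on_Ioo_of_ne_zero {g : ℝ → ℝ} {a b : ℝ} (hg : ContinuousOn g (Ico a b))
    (hga : 0 < g a) (hne : ∀ x ∈ Ioo a b, g x ≠ 0) : ∀ x ∈ Ioo a b, 0 < g x := by
  intro x hx
  by_contra! hgx
  have hcont : ContinuousOn g (Icc a x) := hg.mono (Icc_subset_Ico_right hx.2)
  obtain ⟨y, hy, hgy⟩ := intermediate_value_Icc' hx.1.le hcont ⟨hgx, hga.le⟩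
  have hay : a ≠ y := by
    rintro rfl
    exact hga.ne' hgy
  exact hne y ⟨hy.1.lt_of_ne hay, hy.2.trans_lt hx.2⟩ hgy

theorem exists_neg_on_Ioo_add_of_neg_on_Ioc {g : ℝ → ℝ} {a b c : ℝ} (hg : ContinuousAt g b)
    (hab : a < b) (hbc : b < c) (hneg : ∀ x ∈ Ioc a b, g x < 0) :
    ∃ ε > 0, b + ε < c ∧ ∀ x ∈ Ioo a (b + ε), g x < 0 := by
  obtain ⟨d, hbd, hdc⟩ := exists_between hbc
  have hev : {x | g x < 0} ∈ nhdsWithin b (Ioi b) :=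
    mem_nhdsWithin_of_mem_nhds (hg.eventually_lt_const (hneg b ⟨hab, le_rfl⟩))
  obtain ⟨u, ⟨hbu, hud⟩, hu⟩ := (mem_nhdsGT_iff_exists_mem_Ioc_Ioo_subset hbd).1 hev
  refine ⟨u - b, sub_pos.2 hbu, by linarith, fun x hx => ?_⟩
  rcases le_or_gt x b with hxb | hbx
  · exact hneg x ⟨hx.1, hxb⟩
  · exact hu ⟨hbx, by linarith [hx.2]⟩

/-- A strictly log-concave radial density on `(0, b)` vanishing at `0`, such as the area density
of the geodesic spheres of a space form. Log-concavity is stated as `w w'' < w'²`. -/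
structure IsLogConcaveDensity (w : ℝ → ℝ) (b : ℝ) : Prop where
  continuousOn : ContinuousOn w (Ico 0 b)
  contDiffOn : ContDiffOn ℝ 2 w (Ioo 0 b)
  zero : w 0 = 0
  pos : ∀ ρ ∈ Ioo 0 b, 0 < w ρ
  log_concave : ∀ ρ ∈ Ioo 0 b, w ρ * deriv (deriv w) ρ < deriv w ρ ^ 2

/-- `U` is a radial solution of `ΔU + f(U) = 0` on the ball of radius `b`, for the Laplacian with
radial density `w`. Radial regularity at the centre is encoded by `U` being `C²` on `(-b, b)`. -/
structure IsRadialSol (w f U : ℝ → ℝ) (b : ℝ) : Prop where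
  contDiffOn : ContDiffOn ℝ 2 U (Ioo (-b) b)
  ode : ∀ ρ ∈ Ioo 0 b,
    deriv (deriv U) ρ + deriv w ρ / w ρ * deriv U ρ + f (U ρ) = 0

/-- The numerator `U'' U - U'²` of `(log U)''`, whose sign is that of `(log U)''` where `U ≠ 0`
but which makes sense across the zeros of `U`. -/
noncomputable def logSecondDerivNum (U : ℝ → ℝ) (ρ : ℝ) : ℝ :=
  deriv (deriv U) ρ * U ρ - deriv U ρ ^ 2

theorem hasDerivAt_deriv_of_contDiffOn_two {U : ℝ → ℝ} {s : Set ℝ} (hU : ContDiffOn ℝ 2 U s)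
    (hs : IsOpen s) {x : ℝ} (hx : x ∈ s) : HasDerivAt (deriv U) (deriv (deriv U) x) x := by
  have hU' : ContDiffOn ℝ 1 (deriv U) s := hU.deriv_of_isOpen hs (by norm_num)
  exact (hU'.differentiableOn one_ne_zero).hasDerivAt (hs.mem_nhds hx)

theorem continuousOn_logSecondDerivNum {U : ℝ → ℝ} {s : Set ℝ} (hU : ContDiffOn ℝ 2 U s)
    (hs : IsOpen s) : ContinuousOn (logSecondDerivNum U) s := by
  have hU' : ContDiffOn ℝ 1 (deriv U) s := hU.deriv_of_isOpen hs (by norm_num)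
  have hU'' : ContinuousOn (deriv (deriv U)) s := hU'.continuousOn_deriv_of_isOpen hs le_rfl
  exact (hU''.mul hU.continuousOn).sub (hU'.continuousOn.pow 2)

namespace IsLogConcaveDensity

variable {w : ℝ → ℝ} {b : ℝ}

theorem hasDerivAt (hw : IsLogConcaveDensity w b) {ρ : ℝ} (hρ : ρ ∈ Ioo 0 b) :
    HasDerivAt w (deriv w ρ) ρ :=
  (hw.contDiffOn.differentiableOn two_ne_zero).hasDerivAt (isOpen_Ioo.mem_nhds hρ)

theorem hasDerivAt_deriv (hw : IsLogConcaveDensity w b) {ρ : ℝ} (hρ : ρ ∈ Ioo 0 b) :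
    HasDerivAt (deriv w) (deriv (deriv w) ρ) ρ :=
  hasDerivAt_deriv_of_contDiffOn_two hw.contDiffOn isOpen_Ioo hρ

end IsLogConcaveDensity

namespace IsRadialSol

variable {w f U : ℝ → ℝ} {b R : ℝ}

theorem hasDerivAt (hU : IsRadialSol w f U b) {ρ : ℝ} (hρ : ρ ∈ Ioo 0 b) :
    HasDerivAt U (deriv U ρ) ρ :=
  (hU.contDiffOn.differentiableOn two_ne_zero).hasDerivAt
    (Ioo_mem_nhds (by linarith [hρ.1, hρ.2]) hρ.2)

theorem hasDerivAt_deriv (hU : IsRadialSol w f U b) {ρ : ℝ} (hρ : ρ ∈ Ioo 0 b) :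
    HasDerivAt (deriv U) (deriv (deriv U) ρ) ρ :=
  hasDerivAt_deriv_of_contDiffOn_two hU.contDiffOn isOpen_Ioo ⟨by linarith [hρ.1, hρ.2], hρ.2⟩

theorem density_mul_deriv_deriv (hw : IsLogConcaveDensity w b) (hU : IsRadialSol w f U b) {ρ : ℝ}
    (hρ : ρ ∈ Ioo 0 b) :
    w ρ * deriv (deriv U) ρ = -(deriv w ρ * deriv U ρ) - w ρ * f (U ρ) := by
  have hwρ : w ρ ≠ 0 := (hw.pos ρ hρ).ne'
  have hode := hU.ode ρ hρ
  field_simp at hode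
  linarith

theorem hasDerivAt_flux (hw : IsLogConcaveDensity w b) (hU : IsRadialSol w f U b) {ρ : ℝ}
    (hρ : ρ ∈ Ioo 0 b) :
    HasDerivAt (fun x => w x * deriv U x) (-(w ρ * f (U ρ))) ρ := by
  refine ((hw.hasDerivAt hρ).fun_mul (hU.hasDerivAt_deriv hρ)).congr_deriv ?_
  linear_combination hU.density_mul_deriv_deriv hw hρ

theorem deriv_neg (hw : IsLogConcaveDensity w b) (hU : IsRadialSol w f U b) (hR : R < b)
    (hf : ∀ u > 0, 0 < f u) (hpos : ∀ ρ ∈ Ioo 0 R, 0 < U ρ) {ρ : ℝ} (hρ : ρ ∈ Ioc 0 R) :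
    deriv U ρ < 0 := by
  have hU' : ContinuousOn (deriv U) (Ioo (-b) b) :=
    hU.contDiffOn.continuousOn_deriv_of_isOpen isOpen_Ioo one_le_two
  have hb : -b < 0 := by linarith [hρ.1, hρ.2]
  have hflux : w ρ * deriv U ρ < 0 := by
    refine neg_of_deriv_neg (g := fun x => w x * deriv U x) ?_ ?_ (fun x hx => ?_) ρ hρ
    · exact (hw.continuousOn.mono (Icc_subset_Ico_right hR)).mul
        (hU'.mono (Icc_subset_Ioo hb hR))
    · simp [hw.zero]
    · have hxb : x ∈ Ioo 0 b := ⟨hx.1, hx.2.trans hR⟩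
      rw [(hU.hasDerivAt_flux hw hxb).deriv]
      exact neg_neg_of_pos (mul_pos (hw.pos x hxb) (hf _ (hpos x hx)))
  exact neg_of_mul_neg_right hflux (hw.pos ρ ⟨hρ.1, hρ.2.trans_lt hR⟩).le

theorem density_mul_logSecondDerivNum (hw : IsLogConcaveDensity w b) (hU : IsRadialSol w f U b)
    {ρ : ℝ} (hρ : ρ ∈ Ioo 0 b) :
    w ρ * logSecondDerivNum U ρ =
      -(deriv w ρ * deriv U ρ * U ρ) - w ρ * f (U ρ) * U ρ - w ρ * deriv U ρ ^ 2 := by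
  rw [logSecondDerivNum]
  linear_combination U ρ * hU.density_mul_deriv_deriv hw hρ

theorem hasDerivAt_density_mul_logSecondDerivNum (hw : IsLogConcaveDensity w b)
    (hU : IsRadialSol w f U b) {ρ : ℝ} (hρ : ρ ∈ Ioo 0 b) (hfd : DifferentiableAt ℝ f (U ρ)) :
    HasDerivAt (fun x => w x * logSecondDerivNum U x)
      (U ρ * deriv U ρ * (deriv w ρ ^ 2 - w ρ * deriv (deriv w) ρ) / w ρ +
        w ρ * deriv U ρ * (f (U ρ) - U ρ * deriv f (U ρ))) ρ := by
  -- `U''` itself need not be differentiable, so the equation is used to eliminate it first.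
  have hreduced : (fun x => w x * logSecondDerivNum U x) =ᶠ[nhds ρ] fun x =>
      -(deriv w x * deriv U x * U x) - w x * f (U x) * U x - w x * deriv U x ^ 2 :=
    Filter.eventuallyEq_of_mem (isOpen_Ioo.mem_nhds hρ)
      fun x hx => hU.density_mul_logSecondDerivNum hw hx
  have hw' := hw.hasDerivAt hρ
  have hw'' := hw.hasDerivAt_deriv hρ
  have hU' := hU.hasDerivAt hρ
  have hU'' := hU.hasDerivAt_deriv hρ
  have hfU : HasDerivAt (fun x => f (U x)) (deriv f (U ρ) * deriv U ρ) ρ :=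
    hfd.hasDerivAt.comp ρ hU'
  refine HasDerivAt.congr_of_eventuallyEq ?_ hreduced
  refine ((((hw''.fun_mul hU'').fun_mul hU').fun_neg.fun_sub
    ((hw'.fun_mul hfU).fun_mul hU')).fun_sub (hw'.fun_mul (hU''.fun_pow 2))).congr_deriv ?_
  have hwρ : w ρ ≠ 0 := (hw.pos ρ hρ).ne'
  have hode := hU.density_mul_deriv_deriv hw hρ
  field_simp
  linear_combination (-deriv w ρ * U ρ - 2 * w ρ * deriv U ρ) * hode

theorem logSecondDerivNum_neg (hw : IsLogConcaveDensity w b) (hU : IsRadialSol w f U b)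
    (hR : R < b) (hfd : ∀ u > 0, DifferentiableAt ℝ f u) (hf : ∀ u > 0, 0 < f u)
    (hf' : ∀ u > 0, u * deriv f u ≤ f u) (hpos : ∀ ρ ∈ Ioo 0 R, 0 < U ρ) {ρ : ℝ}
    (hρ : ρ ∈ Ioc 0 R) : logSecondDerivNum U ρ < 0 := by
  have hb : -b < 0 := by linarith [hρ.1, hρ.2]
  have hweighted : w ρ * logSecondDerivNum U ρ < 0 := by
    refine neg_of_deriv_neg (g := fun x => w x * logSecondDerivNum U x) ?_ ?_ (fun x hx => ?_) ρ hρ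
    · exact (hw.continuousOn.mono (Icc_subset_Ico_right hR)).mul
        ((continuousOn_logSecondDerivNum hU.contDiffOn isOpen_Ioo).mono (Icc_subset_Ioo hb hR))
    · simp [hw.zero]
    · have hxb : x ∈ Ioo 0 b := ⟨hx.1, hx.2.trans hR⟩
      have hUx : 0 < U x := hpos x hx
      have hU'x : deriv U x < 0 := hU.deriv_neg hw hR hf hpos ⟨hx.1, hx.2.le⟩
      have hwx : 0 < w x := hw.pos x hxb
      rw [(hU.hasDerivAt_density_mul_logSecondDerivNum hw hxb (hfd _ hUx)).deriv]
      refine add_neg_of_neg_of_nonpos (div_neg_of_neg_of_pos ?_ hwx) ?_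
      · exact mul_neg_of_neg_of_pos (mul_neg_of_pos_of_neg hUx hU'x)
          (sub_pos.2 (hw.log_concave x hxb))
      · exact mul_nonpos_of_nonpos_of_nonneg (mul_neg_of_pos_of_neg hwx hU'x).le
          (sub_nonneg.2 (hf' _ hUx))
  exact neg_of_mul_neg_right hweighted (hw.pos ρ ⟨hρ.1, hρ.2.trans_lt hR⟩).le

end IsRadialSol

theorem isLogConcaveDensity_sin : IsLogConcaveDensity sin π where
  continuousOn := continuous_sin.continuousOn
  contDiffOn := contDiff_sin.contDiffOn
  zero := sin_zero
  pos _ hρ := sin_pos_of_mem_Ioo hρ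
  log_concave ρ _ := by
    rw [Real.deriv_sin, Real.deriv_cos]
    nlinarith [sin_sq_add_cos_sq ρ]

namespace IsEvenSol

variable {f U : ℝ → ℝ}

theorem isRadialSol (hU : IsEvenSol f U) : IsRadialSol sin f U π where
  contDiffOn := hU.2.1
  ode ρ hρ := by
    rw [Real.deriv_sin]
    exact hU.2.2 ρ ⟨(neg_neg_of_pos pi_pos).trans hρ.1, hρ.2⟩ hρ.1.ne'

theorem pos_of_ne_zero (hU : IsEvenSol f U) (hU0 : 0 < U 0) {R : ℝ} (hR : R ≤ π)
    (hne : ∀ ρ ∈ Ioo 0 R, U ρ ≠ 0) : ∀ ρ ∈ Ioo 0 R, 0 < U ρ :=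
  pos_on_Ioo_of_ne_zero
    (hU.2.1.continuousOn.mono fun _ hρ =>
      ⟨(neg_neg_of_pos pi_pos).trans_le hρ.1, hρ.2.trans_le hR⟩) hU0 hne

end IsEvenSol

theorem stmt9_general {w f U : ℝ → ℝ} {b R : ℝ} (hw : IsLogConcaveDensity w b)
    (hU : IsRadialSol w f U b) (hfd : ∀ u > 0, DifferentiableAt ℝ f u)
    (hf : ∀ u > 0, 0 < f u) (hf' : ∀ u > 0, u * deriv f u ≤ f u)
    (hR : R ∈ Ioo 0 b) (hpos : ∀ ρ ∈ Ioo 0 R, 0 < U ρ) :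
    ∃ ε > 0, R + ε < b ∧
      ∀ ρ ∈ Ioo 0 (R + ε), deriv (deriv U) ρ * U ρ - deriv U ρ ^ 2 < 0 := by
  have hRmem : R ∈ Ioo (-b) b := ⟨by linarith [hR.1, hR.2], hR.2⟩
  have hcont : ContinuousAt (logSecondDerivNum U) R :=
    (continuousOn_logSecondDerivNum hU.contDiffOn isOpen_Ioo).continuousAt
      (isOpen_Ioo.mem_nhds hRmem)
  exact exists_neg_on_Ioo_add_of_neg_on_Ioc hcont hR.1 hR.2
    fun _ hρ => hU.logSecondDerivNum_neg hw hR.2 hfd hf hf' hpos hρ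

/-- For `λ > 0` and `U` the even solution of `U'' + (cot ρ) U' + λ U = 0` with `U(0) = 1`
and smallest positive zero `R_λ`, there is `ε > 0` with `R_λ + ε < π` such that
`U'' U - U'²` does not vanish on `(0, R_λ + ε)`; in fact it is negative there. -/
theorem stmt9 (lam : ℝ) (hlam : 0 < lam) (U : ℝ → ℝ)
    (hU : IsEvenSol (fun x => lam * x) U) (hU0 : U 0 = 1)
    (R : ℝ) (hR : R ∈ Set.Ioo 0 Real.pi) (hUR : U R = 0)
    (hRmin : ∀ ρ ∈ Set.Ioo 0 R, U ρ ≠ 0) :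
    ∃ ε > (0:ℝ), R + ε < Real.pi ∧
      (∀ ρ ∈ Set.Ioo 0 (R + ε), deriv (deriv U) ρ * U ρ - (deriv U ρ) ^ 2 ≠ 0) ∧
      (∀ ρ ∈ Set.Ioo 0 (R + ε), deriv (deriv U) ρ * U ρ - (deriv U ρ) ^ 2 < 0) := by
  obtain ⟨ε, hε, hRε, hneg⟩ := stmt9_general isLogConcaveDensity_sin hU.isRadialSol
    (fun _ _ => by fun_prop) (fun _ hu => mul_pos hlam hu) (by simp [mul_comm]) hR
    (hU.pos_of_ne_zero (hU0 ▸ one_pos) hR.2.le hRmin)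
  exact ⟨ε, hε, hRε, fun ρ hρ => (hneg ρ hρ).ne, hneg⟩
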